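/- For an arbitrary prime power q and any divisor t of q−1, the graph G(q², t(q+1)) is K_{3,2t²+1}-free; concretely, any three pairwise distinct vertices of G(q², t(q+1)) have at most 2t² common neighbors. -/

import Mathlib

/-- The scaling relation by the subgroup `H ≤ Fˣ` on nonzero pairs of field elements:
`(a₁,b₁) ∼ (a₂,b₂)` iff there is `h ∈ H` with `a₁ = h·a₂` and `b₁ = h·b₂`. -/
def Grel {F : Type} [Field F] (H : Subgroup Fˣ) (p p' : {p : F × F // p ≠ 0}) : Prop :=
  ∃ h ∈ H, p.1.1 = (h : F) * p'.1.1 ∧ p.1.2 = (h : F) * p'.1.2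

/-- The vertex set of the graph `G(q,t)`: nonzero pairs modulo scaling by `H`. -/
def GVertex (F : Type) [Field F] (H : Subgroup Fˣ) : Type :=
  Quot (Grel H)

/-- Membership of a field element in the subgroup `H ≤ Fˣ`. -/
def memH {F : Type} [Field F] (H : Subgroup Fˣ) (x : F) : Prop :=
  ∃ h ∈ H, (h : F) = x

/-- Adjacency in the graph `G(q,t)`: `⟨a,b⟩` and `⟨x,y⟩` are adjacent iff `a·x + b·y ∈ H`
(this condition is independent of the chosen representatives). -/
def GAdj {F : Type} [Field F] (H : Subgroup Fˣ) (u v : GVertex F H) : Prop :=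
  ∃ p p' : {p : F × F // p ≠ 0},
    u = Quot.mk (Grel H) p ∧ v = Quot.mk (Grel H) p' ∧
      memH H (p.1.1 * p'.1.1 + p.1.2 * p'.1.2)

/-! Each common neighbor of `⟨v₁⟩`, `⟨v₂⟩`, `⟨v₃⟩` has a representative `u` with `u · v₃ = 1`, and
then `(u · v₁)ⁿ = (u · v₂)ⁿ = 1` for `n = t(q+1)`. Writing `v₃ = α v₁ + β v₂`, the element
`X = α (u · v₁)` determines `u` and satisfies `Xⁿ = αⁿ` and `(1 - X)ⁿ = βⁿ`. Hence `X^(q+1) = a` and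
`(1 - X)^(q+1) = b` for one of at most `t²` pairs `(a, b)` of `t`-th roots. Since `x ↦ x^q` is
additive, subtracting the two equations gives `X + X^q = 1 + a - b`, which turns `X · X^q = a` into
a quadratic equation for `X`. -/

section Counting

variable {R : Type*} [CommRing R] [IsDomain R]

theorem encard_mul_sub_eq_le_two (s a : R) : {x : R | x * (s - x) = a}.encard ≤ 2 := by
  rcases Set.eq_empty_or_nonempty {x : R | x * (s - x) = a} with hempty | ⟨y, hy : _ = a⟩
  · simp [hempty]
  · have hsub : {x : R | x * (s - x) = a} ⊆ {y, s - y} := by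
      intro x (hx : x * (s - x) = a)
      have hprod : (x - y) * (x - (s - y)) = 0 := by linear_combination hy - hx
      simpa [sub_eq_zero] using hprod
    calc
      _ ≤ ({y, s - y} : Set R).encard := Set.encard_le_encard hsub
      _ ≤ ({s - y} : Set R).encard + 1 := Set.encard_insert_le _ _
      _ = 2 := by rw [Set.encard_singleton, one_add_one_eq_two]

theorem encard_pow_succ_eq_le_two (p k : ℕ) [ExpChar R p] (a b : R) :
    {x : R | x ^ (p ^ k + 1) = a ∧ (1 - x) ^ (p ^ k + 1) = b}.encard ≤ 2 := by
  refine (Set.encard_le_encard ?_).trans (encard_mul_sub_eq_le_two (1 + a - b) a)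
  rintro x ⟨hx, hx'⟩
  rw [pow_succ] at hx
  rw [pow_succ, sub_pow_expChar_pow, one_pow] at hx'
  change x * (1 + a - b - x) = a
  linear_combination x * hx' + (1 - x) * hx

theorem card_nthRootsFinset_le (n : ℕ) (a : R) : (Polynomial.nthRootsFinset n a).card ≤ n := by
  classical
  rw [Polynomial.nthRootsFinset_def]
  exact (Multiset.toFinset_card_le _).trans (Polynomial.card_nthRoots n a)

theorem encard_pow_mul_succ_eq_le (p k : ℕ) [ExpChar R p] {t : ℕ} (ht : 0 < t) (a b : R) :
    {x : R | x ^ (t * (p ^ k + 1)) = a ∧ (1 - x) ^ (t * (p ^ k + 1)) = b}.encard ≤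
      (2 * t ^ 2 : ℕ) := by
  let rootPairs := Polynomial.nthRootsFinset t a ×ˢ Polynomial.nthRootsFinset t b
  let fiber (c : R × R) : Set R := {x | x ^ (p ^ k + 1) = c.1 ∧ (1 - x) ^ (p ^ k + 1) = c.2}
  have hcover : {x : R | x ^ (t * (p ^ k + 1)) = a ∧ (1 - x) ^ (t * (p ^ k + 1)) = b} ⊆
      ⋃ c ∈ rootPairs, fiber c := by
    rintro x ⟨hx, hx'⟩
    rw [mul_comm, pow_mul, ← Polynomial.mem_nthRootsFinset ht] at hx hx'
    exact Set.mem_biUnion (Finset.mk_mem_product hx hx') ⟨rfl, rfl⟩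
  have hcard : rootPairs.card ≤ t ^ 2 := by
    rw [Finset.card_product, sq]
    exact Nat.mul_le_mul (card_nthRootsFinset_le t a) (card_nthRootsFinset_le t b)
  calc
    _ ≤ (⋃ c ∈ rootPairs, fiber c).encard := Set.encard_le_encard hcover
    _ ≤ ∑ c ∈ rootPairs, (fiber c).encard := rootPairs.set_encard_biUnion_le fiber
    _ ≤ rootPairs.card • 2 :=
      Finset.sum_le_card_nsmul _ _ _ fun c _ => encard_pow_succ_eq_le_two p k c.1 c.2
    _ ≤ (2 * t ^ 2 : ℕ) := by
      rw [nsmul_eq_mul, mul_comm]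
      exact_mod_cast Nat.mul_le_mul_left 2 hcard

end Counting

section Pairing

variable {R : Type*} [CommRing R]

/-- The bilinear form `u · v` on `R × R` whose values decide adjacency. -/
def pairing (u v : R × R) : R := u.1 * v.1 + u.2 * v.2

/-- The determinant of two vectors in `R × R`. Over a field it vanishes exactly when they are
linearly dependent. -/
def pairDet (u v : R × R) : R := u.1 * v.2 - v.1 * u.2

theorem pairing_units_smul_left (c : Rˣ) (u v : R × R) :
    pairing (c • u) v = c * pairing u v := by
  simp only [pairing, Units.smul_def, Prod.smul_fst, Prod.smul_snd, smul_eq_mul]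
  ring

theorem pairing_units_smul_right (c : Rˣ) (u v : R × R) :
    pairing u (c • v) = c * pairing u v := by
  simp only [pairing, Units.smul_def, Prod.smul_fst, Prod.smul_snd, smul_eq_mul]
  ring

theorem pairDet_mul_pairing (u v₁ v₂ v₃ : R × R) :
    pairDet v₃ v₂ * pairing u v₁ + pairDet v₁ v₃ * pairing u v₂ =
      pairDet v₁ v₂ * pairing u v₃ := by
  simp only [pairDet, pairing]
  ring

theorem pairing_smul_eq_of_pairDet_eq_zero {v w : R × R} (h : pairDet v w = 0) (u : R × R) :
    pairing u w • v = pairing u v • w := by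
  simp only [pairDet] at h
  ext <;> simp only [pairing, Prod.smul_fst, Prod.smul_snd, smul_eq_mul]
  · linear_combination u.2 * h
  · linear_combination -u.1 * h

theorem eq_of_pairing_eq [IsDomain R] {u u' v w : R × R} (hvw : pairDet v w ≠ 0)
    (hv : pairing u v = pairing u' v) (hw : pairing u w = pairing u' w) : u = u' := by
  simp only [pairing] at hv hw
  ext <;> apply mul_left_cancel₀ hvw <;> simp only [pairDet]
  · linear_combination w.2 * hv - v.2 * hw
  · linear_combination v.1 * hw - w.1 * hv

theorem encard_pairing_pow_eq_one_le {F : Type*} [Field F] (p k : ℕ) [ExpChar F p] {t : ℕ}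
    (ht : 0 < t) {v₁ v₂ v₃ : F × F} (h₁₂ : pairDet v₁ v₂ ≠ 0) (h₁₃ : pairDet v₁ v₃ ≠ 0)
    (h₃₂ : pairDet v₃ v₂ ≠ 0) :
    {u : F × F | pairing u v₁ ^ (t * (p ^ k + 1)) = 1 ∧ pairing u v₂ ^ (t * (p ^ k + 1)) = 1 ∧
      pairing u v₃ = 1}.encard ≤ (2 * t ^ 2 : ℕ) := by
  let α := pairDet v₃ v₂ / pairDet v₁ v₂
  let β := pairDet v₁ v₃ / pairDet v₁ v₂
  have hcramer (u : F × F) : α * pairing u v₁ + β * pairing u v₂ = pairing u v₃ := by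
    simp only [α, β]
    field_simp
    exact pairDet_mul_pairing u v₁ v₂ v₃
  refine (Set.encard_le_encard_of_injOn (f := fun u => α * pairing u v₁) ?_ ?_).trans
    (encard_pow_mul_succ_eq_le p k ht (α ^ (t * (p ^ k + 1))) (β ^ (t * (p ^ k + 1))))
  · rintro u ⟨h₁, h₂, h₃⟩
    have hsub : 1 - α * pairing u v₁ = β * pairing u v₂ := by
      linear_combination -hcramer u - h₃
    constructor
    · rw [mul_pow, h₁, mul_one]
    · rw [hsub, mul_pow, h₂, mul_one]
  · rintro u ⟨-, -, hu⟩ u' ⟨-, -, hu'⟩ huu'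
    have hα : α ≠ 0 := div_ne_zero h₃₂ h₁₂
    exact eq_of_pairing_eq h₁₃ (mul_left_cancel₀ hα huu') (hu.trans hu'.symm)

end Pairing

theorem le_rootsOfUnity_card {M : Type*} [CommMonoid M] (H : Subgroup Mˣ) :
    H ≤ rootsOfUnity (Nat.card H) M := fun h hh =>
  congrArg Subtype.val (pow_card_eq_one' (x := (⟨h, hh⟩ : H)))

section Graph

variable {F : Type} [Field F] {H : Subgroup Fˣ}

theorem grel_iff_exists_smul_eq {v w : {v : F × F // v ≠ 0}} :
    Grel H v w ↔ ∃ h ∈ H, h • w = v := by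
  simp [Grel, Subtype.ext_iff, Prod.ext_iff, Units.smul_def, eq_comm]

theorem grel_equivalence (H : Subgroup Fˣ) : Equivalence (Grel H) := by
  have heq : Grel H = MulAction.orbitRel H {v : F × F // v ≠ 0} := by
    ext v w
    rw [grel_iff_exists_smul_eq, MulAction.orbitRel_apply, MulAction.mem_orbit_iff]
    simp [Subgroup.smul_def]
  exact heq ▸ (MulAction.orbitRel H {v : F × F // v ≠ 0}).iseqv

theorem gVertex_mk_eq_mk_iff {v w : {v : F × F // v ≠ 0}} :
    Quot.mk (Grel H) v = Quot.mk (Grel H) w ↔ ∃ h ∈ H, h • w = v := by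
  rw [(grel_equivalence H).quot_mk_eq_iff, grel_iff_exists_smul_eq]

theorem memH_mul_left {h : Fˣ} (hh : h ∈ H) {x : F} (hx : memH H x) : memH H (h * x) := by
  obtain ⟨k, hk, rfl⟩ := hx
  exact ⟨h * k, H.mul_mem hh hk, Units.val_mul h k⟩

theorem memH.pow_eq_one {n : ℕ} (hH : H ≤ rootsOfUnity n F) {x : F} (hx : memH H x) :
    x ^ n = 1 := by
  obtain ⟨h, hh, rfl⟩ := hx
  exact (mem_rootsOfUnity' n h).1 (hH hh)

theorem gAdj_mk_mk_iff {u v : {v : F × F // v ≠ 0}} :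
    GAdj H (Quot.mk _ u) (Quot.mk _ v) ↔ memH H (pairing u.1 v.1) := by
  refine ⟨?_, fun h => ⟨u, v, rfl, rfl, h⟩⟩
  rintro ⟨u', v', hu, hv, huv⟩
  obtain ⟨a, ha, rfl⟩ := gVertex_mk_eq_mk_iff.1 hu
  obtain ⟨b, hb, rfl⟩ := gVertex_mk_eq_mk_iff.1 hv
  rw [Units.smul_coe, Units.smul_coe, pairing_units_smul_left, pairing_units_smul_right]
  exact memH_mul_left ha (memH_mul_left hb huv)

theorem GAdj.exists_pairing_eq_one {w : GVertex F H} {v : {v : F × F // v ≠ 0}}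
    (hw : GAdj H w (Quot.mk _ v)) : ∃ u, Quot.mk _ u = w ∧ pairing u.1 v.1 = 1 := by
  obtain ⟨u, rfl⟩ := Quot.exists_rep w
  obtain ⟨h, hh, hval⟩ := gAdj_mk_mk_iff.1 hw
  refine ⟨h⁻¹ • u, gVertex_mk_eq_mk_iff.2 ⟨h⁻¹, H.inv_mem hh, rfl⟩, ?_⟩
  rw [Units.smul_coe, pairing_units_smul_left, ← hval, Units.inv_mul]

theorem pairDet_ne_zero_of_gAdj {w : GVertex F H} {v v' : {v : F × F // v ≠ 0}}
    (hv : GAdj H w (Quot.mk _ v)) (hv' : GAdj H w (Quot.mk _ v'))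
    (hne : Quot.mk (Grel H) v ≠ Quot.mk (Grel H) v') : pairDet v.1 v'.1 ≠ 0 := by
  obtain ⟨u, rfl, hu⟩ := hv'.exists_pairing_eq_one
  obtain ⟨h, hh, hval⟩ := gAdj_mk_mk_iff.1 hv
  refine fun hdet => hne (gVertex_mk_eq_mk_iff.2 ⟨h, hh, Subtype.ext ?_⟩)
  rw [Units.smul_coe, Units.smul_def, hval, ← pairing_smul_eq_of_pairDet_eq_zero hdet, hu, one_smul]

theorem G_q2_K3_2t2_free_general (p k : ℕ) [ExpChar F p] {t : ℕ} (ht : 0 < t)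
    (hH : H ≤ rootsOfUnity (t * (p ^ k + 1)) F) {v₁ v₂ v₃ : GVertex F H}
    (h₁₂ : v₁ ≠ v₂) (h₁₃ : v₁ ≠ v₃) (h₂₃ : v₂ ≠ v₃) :
    {w : GVertex F H | GAdj H w v₁ ∧ GAdj H w v₂ ∧ GAdj H w v₃}.encard ≤ (2 * t ^ 2 : ℕ) := by
  obtain ⟨v₁, rfl⟩ := Quot.exists_rep v₁
  obtain ⟨v₂, rfl⟩ := Quot.exists_rep v₂
  obtain ⟨v₃, rfl⟩ := Quot.exists_rep v₃
  rcases Set.eq_empty_or_nonempty {w : GVertex F H | GAdj H w (Quot.mk _ v₁) ∧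
    GAdj H w (Quot.mk _ v₂) ∧ GAdj H w (Quot.mk _ v₃)} with hempty | ⟨w, hw₁, hw₂, hw₃⟩
  · simp [hempty]
  have hcount := encard_pairing_pow_eq_one_le p k ht (pairDet_ne_zero_of_gAdj hw₁ hw₂ h₁₂)
    (pairDet_ne_zero_of_gAdj hw₁ hw₃ h₁₃) (pairDet_ne_zero_of_gAdj hw₃ hw₂ h₂₃.symm)
  refine le_trans (Set.encard_le_encard ?_) ((Set.encard_image_le (Quot.mk (Grel H)) _).trans
    ((Set.encard_preimage_val_le_encard_right {v : F × F | v ≠ 0} _).trans hcount))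
  rintro w ⟨hw₁, hw₂, hw₃⟩
  obtain ⟨u, rfl, hu⟩ := hw₃.exists_pairing_eq_one
  exact ⟨u, ⟨(gAdj_mk_mk_iff.1 hw₁).pow_eq_one hH, (gAdj_mk_mk_iff.1 hw₂).pow_eq_one hH, hu⟩, rfl⟩

end Graph

/-- For an arbitrary prime power `q` and `t ∣ q−1`, the graph `G(q², t(q+1))` is
`K_{3,2t²+1}`-free: any three pairwise distinct vertices have at most `2t²` common
neighbors. -/
theorem G_q2_K3_2t2_free {q t : ℕ} (hq : IsPrimePow q) (ht : t ∣ q - 1)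
    {F : Type} [Field F] [Fintype F] (hF : Fintype.card F = q ^ 2)
    (H : Subgroup Fˣ) (hH : Nat.card H = t * (q + 1))
    (v₁ v₂ v₃ : GVertex F H) (h₁₂ : v₁ ≠ v₂) (h₁₃ : v₁ ≠ v₃) (h₂₃ : v₂ ≠ v₃) :
    {w : GVertex F H | GAdj H w v₁ ∧ GAdj H w v₂ ∧ GAdj H w v₃}.ncard ≤ 2 * t ^ 2 := by
  obtain ⟨p, k, hp, -, rfl⟩ := hq
  have : Fact p.Prime := ⟨hp.nat_prime⟩
  have : CharP F p := charP_of_card_eq_prime_pow (hF.trans (pow_mul p k 2).symm)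
  have ht₀ : 0 < t := Nat.pos_of_mul_pos_right (hH ▸ Nat.card_pos (α := H))
  exact ENat.toNat_le_of_le_natCast <|
    G_q2_K3_2t2_free_general p k ht₀ (hH ▸ le_rootsOfUnity_card H) h₁₂ h₁₃ h₂₃
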